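/- For every ε > 0: lim_{k→∞} τ(k, ⌊(2−ε)k⌋) = 1. -/

import Mathlib

open Finset Filter MeasureTheory

open scoped Classical

noncomputable section

/-- The vertex set `{0,1}^d` of the 0/1-cube, as a finite subset of `ℝ^d`. -/
def cube01 (d : ℕ) : Finset (Fin d → ℝ) :=
  (Finset.univ : Finset (Fin d → Bool)).image (fun f i => if f i then 1 else 0)

/-- The vertex set `{-1,+1}^d` of the `±1`-cube, as a finite subset of `ℝ^d`. -/
def pmCube (d : ℕ) : Finset (Fin d → ℝ) :=
  (Finset.univ : Finset (Fin d → Bool)).image (fun f i => if f i then 1 else -1)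

/-- The all-one vector `𝟙 ∈ ℝ^d`. -/
def allOne (d : ℕ) : Fin d → ℝ := fun _ => 1

/-- `C^d_* = {-1,+1}^d \ {-𝟙, 𝟙}`. -/
def pmCubeStar (d : ℕ) : Finset (Fin d → ℝ) :=
  (pmCube d) \ {-(allOne d), allOne d}

/-- `{v,w}` spans an edge (a one-dimensional face) of the polytope `P`:
`v ≠ w` and the segment `[v,w]` is an (exposed) face of `P`. -/
def IsEdge {d : ℕ} (P : Set (Fin d → ℝ)) (v w : Fin d → ℝ) : Prop :=
  v ≠ w ∧ IsExposed ℝ P (segment ℝ v w)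

/-- The number of edges of the graph of the polytope `conv X`. -/
noncomputable def edgeCount {d : ℕ} (X : Finset (Fin d → ℝ)) : ℕ :=
  ((X.powersetCard 2).filter (fun e =>
      ∃ v w, e = {v, w} ∧ IsEdge (convexHull ℝ (X : Set (Fin d → ℝ))) v w)).card

/-- The density of the graph of the polytope `conv X` (whose vertex set is `X`
when `X` consists of 0/1- or `±1`-points): number of edges divided by `C(|X|,2)`. -/
noncomputable def graphDensity {d : ℕ} (X : Finset (Fin d → ℝ)) : ℝ :=
  (edgeCount X : ℝ) / (X.card.choose 2 : ℝ)

/-- The expected graph-density of the convex hull of a uniformly random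
`n`-element subset of `{0,1}^d`. -/
noncomputable def expDensity (d n : ℕ) : ℝ :=
  (∑ X ∈ (cube01 d).powersetCard n, graphDensity X) /
    (((cube01 d).powersetCard n).card : ℝ)

/-- The Hamming distance of `v, w ∈ ℝ^d`. -/
def hdist {d : ℕ} (v w : Fin d → ℝ) : ℕ :=
  (Finset.univ.filter (fun i => v i ≠ w i)).card

/-- `C(v,w)`: the points of the `±1`-cube agreeing with `v` and `w` wherever these agree
(the vertex set of the smallest face of the cube containing `v` and `w`). -/
def cubeFace {d : ℕ} (v w : Fin d → ℝ) : Finset (Fin d → ℝ) :=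
  (pmCube d).filter (fun x => ∀ i, v i = w i → x i = v i)

/-- `C_*(v,w) = C(v,w) \ {v,w}`. -/
def cubeFaceStar {d : ℕ} (v w : Fin d → ℝ) : Finset (Fin d → ℝ) :=
  (cubeFace v w) \ {v, w}

/-- The long-edge probability `τ(k,m)`: the probability that for a uniformly random
`m`-element subset `Y ⊆ C^k_*`, `conv Y ∩ conv{-𝟙,𝟙} = ∅`. -/
noncomputable def tau (k m : ℕ) : ℝ :=
  ((((pmCubeStar k).powersetCard m).filter (fun Y =>
      convexHull ℝ (Y : Set (Fin k → ℝ)) ∩ segment ℝ (-(allOne k)) (allOne k) = ∅)).card : ℝ) /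
    ((((pmCubeStar k).powersetCard m)).card : ℝ)

/-- `Y ∩ (-Y) = ∅`. -/
def NoAntipodal {k : ℕ} (Y : Finset (Fin k → ℝ)) : Prop := ∀ y ∈ Y, -y ∉ Y

/-- `α(k,m)`: the conditional probability that `conv Y ∩ conv{-𝟙,𝟙} = ∅`
given `Y ∩ (-Y) = ∅`, for a uniformly random `m`-element subset `Y ⊆ C^k_*`. -/
noncomputable def alpha (k m : ℕ) : ℝ :=
  ((((pmCubeStar k).powersetCard m).filter (fun (Y : Finset (Fin k → ℝ)) =>
      convexHull ℝ (Y : Set (Fin k → ℝ)) ∩ segment ℝ (-(allOne k)) (allOne k) = ∅ ∧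
        NoAntipodal Y)).card : ℝ) /
    ((((pmCubeStar k).powersetCard m).filter (fun Y => NoAntipodal Y)).card : ℝ)

/-- The sample space for a uniformly random `n`-element subset `X ⊆ {-1,+1}^d`
together with a uniformly random `2`-element subset `{v,w} ⊆ X`. -/
def edgeSpace (d n : ℕ) : Finset (Finset (Fin d → ℝ) × Finset (Fin d → ℝ)) :=
  (((pmCube d).powersetCard n) ×ˢ ((pmCube d).powersetCard 2)).filter (fun p => p.2 ⊆ p.1)

/-- The event that the chosen pair `{v,w}` is an edge of `conv X`. -/
def EdgeEvent {d : ℕ} (p : Finset (Fin d → ℝ) × Finset (Fin d → ℝ)) : Prop :=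
  ∃ v w, p.2 = {v, w} ∧ IsEdge (convexHull ℝ (p.1 : Set (Fin d → ℝ))) v w

/-- The event that the chosen pair `{v,w}` satisfies `dist(v,w) = k`. -/
def DistEvent {d : ℕ} (k : ℕ) (p : Finset (Fin d → ℝ) × Finset (Fin d → ℝ)) : Prop :=
  ∃ v w, v ≠ w ∧ p.2 = {v, w} ∧ hdist v w = k

/-- The event that the chosen pair `{v,w}` satisfies `dist(v,w) = k` and
`#(X ∩ C_*(v,w)) = m`. -/
def DistCapEvent {d : ℕ} (k m : ℕ) (p : Finset (Fin d → ℝ) × Finset (Fin d → ℝ)) : Prop :=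
  ∃ v w, v ≠ w ∧ p.2 = {v, w} ∧ hdist v w = k ∧ (p.1 ∩ cubeFaceStar v w).card = m

/-- The edge probability `π(d,n)`. -/
noncomputable def piEdge (d n : ℕ) : ℝ :=
  (((edgeSpace d n).filter (fun p => EdgeEvent p)).card : ℝ) / ((edgeSpace d n).card : ℝ)

/-- The conditional edge probability `π_k(d,n)` given `dist(v,w) = k`. -/
noncomputable def piEdgeK (d n k : ℕ) : ℝ :=
  (((edgeSpace d n).filter (fun p => EdgeEvent p ∧ DistEvent k p)).card : ℝ) /
    (((edgeSpace d n).filter (fun p => DistEvent k p)).card : ℝ)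

/-- `φ : ℝ^{r+1} → ℝ^r`: the orthogonal projection onto the hyperplane
`H_𝟙 = {x : 𝟙ᵀx = 0}` (namely `x ↦ x - ((𝟙ᵀx)/(r+1))·𝟙`), followed by the
projection to the first `r` coordinates. -/
noncomputable def phi (r : ℕ) (x : Fin (r + 1) → ℝ) : Fin r → ℝ :=
  fun i => x i.castSucc - (∑ j, x j) / (r + 1 : ℝ)

/-- The vector configuration `V_r = φ(C^{r+1}_*)`. -/
noncomputable def Vr (r : ℕ) : Finset (Fin r → ℝ) := (pmCubeStar (r + 1)).image (phi r)

/-- The half configuration `V_r^+ = φ({v ∈ C^{r+1}_* : v_{r+1} = +1})`. -/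
noncomputable def VrPlus (r : ℕ) : Finset (Fin r → ℝ) :=
  (((pmCubeStar (r + 1)).filter (fun v => v (Fin.last r) = 1))).image (phi r)

/-- The number of sign vectors `ε ∈ {-1,+1}^S` with `0 ∉ conv{ε_s · s : s ∈ S}`. -/
noncomputable def signCount {r : ℕ} (S : Finset (Fin r → ℝ)) : ℕ :=
  ((Finset.univ : Finset (↥S → Bool)).filter (fun ε =>
      (0 : Fin r → ℝ) ∉ convexHull ℝ
        (Set.range fun s : ↥S => (if ε s then (1 : ℝ) else -1) • (s : Fin r → ℝ)))).card

/-- `α(S)`: the probability that `0 ∉ conv{ε_s · s : s ∈ S}` for a uniformly random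
sign vector `ε ∈ {-1,+1}^S`. -/
noncomputable def alphaSet {r : ℕ} (S : Finset (Fin r → ℝ)) : ℝ :=
  (signCount S : ℝ) / ((Finset.univ : Finset (↥S → Bool)).card : ℝ)

/-- The complement `ℝ^r \ ⋃_{s ∈ S} H(s)` of the hyperplane arrangement `ℋ(S)`. -/
def arrComplement {r : ℕ} (S : Finset (Fin r → ℝ)) : Set (Fin r → ℝ) :=
  {x | ∀ s ∈ S, ∑ i, s i * x i ≠ 0}

/-- `χ(S)`: the number of chambers (connected components of the complement)
of the hyperplane arrangement `ℋ(S)`. -/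
noncomputable def chi {r : ℕ} (S : Finset (Fin r → ℝ)) : ℕ :=
  Nat.card (ConnectedComponents ↥(arrComplement S))

/-- `b(p,q) = ∑_{i=0}^p C(q,i)`. -/
def bFn (p q : ℕ) : ℕ := ∑ i ∈ Finset.range (p + 1), q.choose i

/-! For `m = O(k)`, a random `m`-set is at most twice as likely to be bad as a tuple of `m`
independent points of `C^k_*`. Such a tuple is good as soon as some linear functional that vanishes
at `𝟙` is positive on all its points.

As in Wendel's theorem, pair the outcomes `s` and `-s` of the next point. If `s` is not in the
subspace `U` on which the functional has to vanish, then the pair produces at most as many bad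
outcomes as discarding `s` and enlarging `U` to `U + ℝ s` do together. So the dimension of `U`
performs a random walk that increases by one with probability `1/2`. This comparison fails when `s`
falls into `U`, but `U` contains at most `2 ^ dim U` points of the cube (Odlyzko), a negligible
share while `dim U < (1 - η) k`. In `m ≤ (2 - 4 η) k` steps the walk reaches `(1 - η) k` only with
exponentially small probability, by Chernoff's bound. -/

section OpenHalfspace

variable {E : Type*} [AddCommGroup E] [Module ℝ E] {U : Submodule ℝ E} {A : Set E} {b : E}

/-- `A` lies strictly on one side of a linear hyperplane containing `U`. For `A = ∅` the zero
functional is allowed, so that the empty set always qualifies. -/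
def InOpenHalfspace (U : Submodule ℝ E) (A : Set E) : Prop :=
  ∃ f : E →ₗ[ℝ] ℝ, U ≤ LinearMap.ker f ∧ ∀ x ∈ A, 0 < f x

namespace InOpenHalfspace

theorem empty (U : Submodule ℝ E) : InOpenHalfspace U ∅ :=
  ⟨0, by simp, by simp⟩

theorem disjoint_convexHull (h : InOpenHalfspace U A) :
    Disjoint (convexHull ℝ A) (U : Set E) := by
  obtain ⟨f, hfU, hfA⟩ := h
  have hpos : convexHull ℝ A ⊆ {x | 0 < f x} :=
    convexHull_min hfA (convex_halfSpace_gt f.isLinear 0)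
  exact Set.disjoint_left.2 fun x hxA hxU => (hpos hxA).ne' (hfU hxU)

/-- A functional that vanishes at `b` is tilted slightly towards `b`; finiteness of `A` keeps it
positive on `A`. -/
theorem insert_of_sup_span (hA : A.Finite) (hb : b ∉ U)
    (h : InOpenHalfspace (U ⊔ Submodule.span ℝ {b}) A) : InOpenHalfspace U (insert b A) := by
  obtain ⟨f, hf, hfA⟩ := h
  obtain ⟨hfU, hfb⟩ := sup_le_iff.1 hf
  replace hfb : f b = 0 := hfb (Submodule.mem_span_singleton_self b)
  obtain ⟨g, hgb, hgU⟩ := Submodule.exists_le_ker_of_notMem hb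
  have hsmall : ∀ᶠ t : ℝ in nhdsWithin 0 (Set.Ioi 0), ∀ x ∈ A, 0 < f x + t * (g b * g x) := by
    refine (hA.eventually_all).2 fun x hx => Filter.Eventually.filter_mono nhdsWithin_le_nhds ?_
    have hcont : ContinuousAt (fun t : ℝ => f x + t * (g b * g x)) 0 := by fun_prop
    exact hcont.eventually (lt_mem_nhds (by simpa using hfA x hx))
  obtain ⟨t, htA, ht⟩ := (hsmall.and self_mem_nhdsWithin).exists
  refine ⟨f + (t * g b) • g, fun u hu => ?_, Set.forall_mem_insert.2 ⟨?_, fun x hx => ?_⟩⟩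
  · have hfu : f u = 0 := hfU hu
    have hgu : g u = 0 := hgU hu
    simp [hfu, hgu]
  · simpa [hfb, mul_assoc] using mul_pos ht (mul_self_pos.2 hgb)
  · simpa [mul_assoc] using htA x hx

theorem insert_or_insert_neg (hA : A.Finite) (hb : b ∉ U) (h : InOpenHalfspace U A) :
    InOpenHalfspace U (insert b A) ∨ InOpenHalfspace U (insert (-b) A) := by
  obtain ⟨f, hfU, hfA⟩ := h
  rcases lt_trichotomy (f b) 0 with hneg | hzero | hpos
  · exact .inr ⟨f, hfU, Set.forall_mem_insert.2 ⟨by simpa using hneg, hfA⟩⟩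
  · refine .inl (insert_of_sup_span hA hb ⟨f, sup_le hfU ?_, hfA⟩)
    simpa [Submodule.span_singleton_le_iff_mem] using hzero
  · exact .inl ⟨f, hfU, Set.forall_mem_insert.2 ⟨hpos, hfA⟩⟩

end InOpenHalfspace

end OpenHalfspace

section BadTuples

variable {E : Type*} [AddCommGroup E] [Module ℝ E] {S : Finset E} {m : ℕ}

/-- The `m`-tuples of points of `S` for which no hyperplane containing `U` has all the points
strictly on one side. The entries need not be distinct, so that they can be drawn independently. -/
def badTuples (S : Finset E) (m : ℕ) (U : Submodule ℝ E) : Finset (Fin m → E) :=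
  {y ∈ Fintype.piFinset fun _ => S | ¬ InOpenHalfspace U (Set.range y)}

/-- The `m`-tuples that become bad once the point `s` is put in front of them. -/
def badTails (S : Finset E) (m : ℕ) (U : Submodule ℝ E) (s : E) : Finset (Fin m → E) :=
  {y ∈ Fintype.piFinset fun _ => S | ¬ InOpenHalfspace U (insert s (Set.range y))}

theorem badTuples_zero (U : Submodule ℝ E) : badTuples S 0 U = ∅ := by
  simp [badTuples, InOpenHalfspace.empty]

theorem card_badTuples_le_pow (U : Submodule ℝ E) : #(badTuples S m U) ≤ #S ^ m := by
  simpa [badTuples] using card_filter_le (Fintype.piFinset fun _ : Fin m => S) _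

theorem card_badTails_le_pow (U : Submodule ℝ E) (s : E) : #(badTails S m U s) ≤ #S ^ m := by
  simpa [badTails] using card_filter_le (Fintype.piFinset fun _ : Fin m => S) _

theorem card_badTuples_succ (U : Submodule ℝ E) :
    #(badTuples S (m + 1) U) = ∑ s ∈ S, #(badTails S m U s) := by
  rw [← card_sigma]
  refine card_nbij' (fun y => ⟨y 0, Fin.tail y⟩) (fun p => Fin.cons p.1 p.2) ?_ ?_ ?_ ?_
  · intro y hy
    rw [← Fin.cons_self_tail y] at hy
    simpa [-Fin.cons_self_tail, badTuples, badTails, Fin.forall_fin_succ, and_assoc,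
      Fin.range_cons] using hy
  · rintro ⟨s, y⟩ hy
    simpa [badTuples, badTails, Fin.forall_fin_succ, and_assoc, Fin.range_cons] using hy
  · intro y _
    exact Fin.cons_self_tail y
  · intro p _
    simp

theorem two_mul_card_badTuples_succ (hS : ∀ s ∈ S, -s ∈ S) (U : Submodule ℝ E) :
    2 * #(badTuples S (m + 1) U) = ∑ s ∈ S, (#(badTails S m U s) + #(badTails S m U (-s))) := by
  have hneg : ∑ s ∈ S, #(badTails S m U (-s)) = ∑ s ∈ S, #(badTails S m U s) :=
    sum_nbij' (-·) (-·) hS hS (by simp) (by simp) (by simp)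
  rw [sum_add_distrib, hneg, card_badTuples_succ, two_mul]

/-- Inclusion–exclusion: a tuple that is bad after adding `s` or `-s` is already bad for
`U + ℝ s`, and one that is bad after adding either of them is already bad for `U`. -/
theorem card_badTails_add_neg_le {U : Submodule ℝ E} {s : E} (hs : s ∉ U) :
    #(badTails S m U s) + #(badTails S m U (-s)) ≤
      #(badTuples S m U) + #(badTuples S m (U ⊔ Submodule.span ℝ {s})) := by
  have hneg : -s ∉ U := by rwa [neg_mem_iff]
  have hspan : Submodule.span ℝ {-s} = Submodule.span ℝ {s} := by
    rw [← Set.neg_singleton, Submodule.span_neg]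
  have hunion : badTails S m U s ∪ badTails S m U (-s) ⊆
      badTuples S m (U ⊔ Submodule.span ℝ {s}) := by
    refine union_subset ?_ ?_ <;> refine monotone_filter_right _ fun y _ hy hgood => hy ?_
    · exact hgood.insert_of_sup_span (Set.finite_range y) hs
    · exact InOpenHalfspace.insert_of_sup_span (Set.finite_range y) hneg (hspan ▸ hgood)
  have hinter : badTails S m U s ∩ badTails S m U (-s) ⊆ badTuples S m U := by
    rw [badTails, badTails, ← filter_and]
    exact monotone_filter_right _ fun y _ hy hgood =>
      (hgood.insert_or_insert_neg (Set.finite_range y) hs).elim hy.1 hy.2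
  rw [← card_union_add_card_inter, add_comm]
  exact add_le_add (card_le_card hinter) (card_le_card hunion)

theorem two_mul_card_badTuples_succ_le (hS : ∀ s ∈ S, -s ∈ S) (U : Submodule ℝ E) :
    2 * #(badTuples S (m + 1) U) ≤ 2 * (#{s ∈ S | s ∈ U} * #S ^ m) +
      ∑ s ∈ S with s ∉ U,
        (#(badTuples S m U) + #(badTuples S m (U ⊔ Submodule.span ℝ {s}))) := by
  rw [two_mul_card_badTuples_succ hS, ← sum_filter_add_sum_filter_not S (· ∈ U)]
  refine add_le_add ?_ (sum_le_sum fun s hs => card_badTails_add_neg_le (mem_filter.1 hs).2)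
  calc ∑ s ∈ S with s ∈ U, (#(badTails S m U s) + #(badTails S m U (-s)))
      ≤ ∑ s ∈ S with s ∈ U, 2 * #S ^ m := sum_le_sum fun s _ => by
        linarith [card_badTails_le_pow (S := S) (m := m) U s,
          card_badTails_le_pow (S := S) (m := m) U (-s)]
    _ = 2 * (#{s ∈ S | s ∈ U} * #S ^ m) := by rw [sum_const, smul_eq_mul]; ring

theorem card_badTuples_succ_le (hS : ∀ s ∈ S, -s ∈ S) {U : Submodule ℝ E} {B B' : ℝ}
    (hB : #(badTuples S m U) ≤ B) (hB' : ∀ s ∉ U, #(badTuples S m (U ⊔ Submodule.span ℝ {s})) ≤ B')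
    (hB'_nonneg : 0 ≤ B') :
    (#(badTuples S (m + 1) U) : ℝ) ≤ #{s ∈ S | s ∈ U} * #S ^ m + #S * ((B + B') / 2) := by
  have hB_nonneg : 0 ≤ B := (Nat.cast_nonneg _).trans hB
  have hrec : 2 * (#(badTuples S (m + 1) U) : ℝ) ≤ 2 * (#{s ∈ S | s ∈ U} * #S ^ m) +
      ∑ s ∈ S with s ∉ U,
        ((#(badTuples S m U) : ℝ) + #(badTuples S m (U ⊔ Submodule.span ℝ {s}))) :=
    mod_cast two_mul_card_badTuples_succ_le hS U
  have hsum : ∑ s ∈ S with s ∉ U,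
      ((#(badTuples S m U) : ℝ) + #(badTuples S m (U ⊔ Submodule.span ℝ {s}))) ≤
        #S * (B + B') := by
    calc _ ≤ ∑ s ∈ S with s ∉ U, (B + B') :=
          sum_le_sum fun s hs => add_le_add hB (hB' s (mem_filter.1 hs).2)
      _ ≤ #S * (B + B') := by
          rw [sum_const, nsmul_eq_mul]
          gcongr
          exact filter_subset _ _
  linarith

/-- The dimension `d` of `U` grows by one with probability `1/2` at each step, and
`exp (a * (d - D))` is on average multiplied by `(1 + exp a) / 2`. The term `m * δ` pays for the
steps at which the new point falls into `U`, and once `d` reaches `D` the bound is trivial. -/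
theorem card_badTuples_le [FiniteDimensional ℝ E] (hS : ∀ s ∈ S, -s ∈ S) {a δ D : ℝ}
    (ha : 0 ≤ a) (hδ : 0 ≤ δ)
    (hsmall : ∀ V : Submodule ℝ E, Module.finrank ℝ V < D → (#{s ∈ S | s ∈ V} : ℝ) ≤ δ * #S)
    (m : ℕ) (U : Submodule ℝ E) :
    (#(badTuples S m U) : ℝ) ≤
      #S ^ m * (((1 + Real.exp a) / 2) ^ m * Real.exp (a * (Module.finrank ℝ U - D)) + m * δ) := by
  induction m generalizing U with
  | zero =>
    simp only [badTuples_zero, card_empty, Nat.cast_zero]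
    positivity
  | succ m ih =>
    set q := (1 + Real.exp a) / 2 with hq
    set X := Real.exp (a * (Module.finrank ℝ U - D)) with hX
    rcases le_or_gt D (Module.finrank ℝ U) with hD | hD
    · have hq1 : 1 ≤ q := by linarith [Real.one_le_exp ha]
      have hX1 : 1 ≤ X := Real.one_le_exp (mul_nonneg ha (sub_nonneg.2 hD))
      calc (#(badTuples S (m + 1) U) : ℝ)
          ≤ #S ^ (m + 1) := by exact_mod_cast card_badTuples_le_pow U
        _ ≤ _ := le_mul_of_one_le_right (by positivity) <|
          le_add_of_le_of_nonneg (one_le_mul_of_one_le_of_one_le (one_le_pow₀ hq1) hX1)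
            (by positivity)
    have hextend (s : E) (hs : s ∉ U) : (#(badTuples S m (U ⊔ Submodule.span ℝ {s})) : ℝ) ≤
        #S ^ m * (q ^ m * (Real.exp a * X) + m * δ) := by
      refine (ih _).trans_eq ?_
      rw [Submodule.finrank_sup_span_singleton hs, hX, ← Real.exp_add, Nat.cast_succ]
      ring_nf
    calc (#(badTuples S (m + 1) U) : ℝ)
        ≤ #{s ∈ S | s ∈ U} * #S ^ m + #S * ((#S ^ m * (q ^ m * X + m * δ) +
            #S ^ m * (q ^ m * (Real.exp a * X) + m * δ)) / 2) :=
          card_badTuples_succ_le hS (ih U) hextend (by positivity)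
      _ ≤ δ * #S * #S ^ m + #S * ((#S ^ m * (q ^ m * X + m * δ) +
            #S ^ m * (q ^ m * (Real.exp a * X) + m * δ)) / 2) := by
          gcongr
          exact hsmall U hD
      _ = #S ^ (m + 1) * (q ^ (m + 1) * X + (m + 1 : ℕ) * δ) := by
          rw [pow_succ q, pow_succ (#S : ℝ), Nat.cast_succ, hq]
          ring

end BadTuples

section Sampling

variable {α : Type*} {S : Finset α} {m n : ℕ}

theorem factorial_le_card_filter_range_eq (hS : #S = m) :
    m.factorial ≤ #{y ∈ Fintype.piFinset fun _ : Fin m => S | Set.range y = S} := by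
  let e := (equivFinOfCardEq hS).symm
  rw [← Fintype.card_fin m, ← Fintype.card_perm, ← card_univ, Fintype.card_fin]
  refine card_le_card_of_injOn (fun π i => (e (π i) : α)) (fun π _ => ?_) fun π _ ρ _ h => ?_
  · refine mem_filter.2 ⟨Fintype.mem_piFinset.2 fun i => (e (π i)).2, ?_⟩
    exact ((π.trans e).surjective.range_comp Subtype.val).trans Subtype.range_coe
  · exact Equiv.ext fun i => e.injective (Subtype.ext (congrFun h i))

theorem card_filter_powersetCard_mul_factorial_le (S : Finset α) (m : ℕ) (P : Set α → Prop) :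
    #((S.powersetCard m).filter fun Y : Finset α => P Y) * m.factorial ≤
      #{y ∈ Fintype.piFinset fun _ : Fin m => S | P (Set.range y)} := by
  rw [← mul_one #{y ∈ Fintype.piFinset fun _ : Fin m => S | P (Set.range y)}]
  refine card_mul_le_card_mul (fun (Y : Finset α) (y : Fin m → α) => Set.range y = (Y : Set α))
    (fun Y hY => ?_) fun y _ => card_le_one.2 fun Y hY Z hZ => ?_
  · obtain ⟨hYS, hP⟩ := mem_filter.1 hY
    obtain ⟨hYS, hcard⟩ := mem_powersetCard.1 hYS
    refine (factorial_le_card_filter_range_eq hcard).trans (card_le_card fun y hy => ?_)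
    obtain ⟨hyY, hrange⟩ := mem_filter.1 hy
    refine mem_filter.2 ⟨mem_filter.2 ⟨?_, hrange ▸ hP⟩, hrange⟩
    exact Fintype.piFinset_subset _ _ (fun _ => hYS) hyY
  · exact coe_injective ((mem_filter.1 hY).2.symm.trans (mem_filter.1 hZ).2)

theorem pow_le_two_mul_descFactorial (h : 2 * m ^ 2 ≤ n) : n ^ m ≤ 2 * n.descFactorial m := by
  rcases n.eq_zero_or_pos with rfl | hn
  · obtain rfl : m = 0 := by nlinarith
    simp
  have hmn : m ≤ n := by nlinarith
  have hn' : (0 : ℝ) < n := mod_cast hn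
  have hbernoulli : (1 / 2 : ℝ) ≤ (1 + -(m / n)) ^ m := by
    have hsq : (m : ℝ) * (m / n) ≤ 1 / 2 := by
      rw [← mul_div_assoc, div_le_div_iff₀ hn' two_pos]
      exact_mod_cast (by linarith : m * m * 2 ≤ 1 * n)
    have hle : (m / n : ℝ) ≤ 1 := (div_le_one hn').2 (mod_cast hmn)
    linarith [one_add_mul_le_pow (a := -(m / n : ℝ)) (by linarith) m]
  have hpow : (n : ℝ) ^ m ≤ 2 * ((n - m : ℕ) : ℝ) ^ m := by
    calc (n : ℝ) ^ m ≤ 2 * (n ^ m * (1 + -(m / n)) ^ m) := by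
          linarith [mul_le_mul_of_nonneg_left hbernoulli (pow_nonneg hn'.le m)]
      _ = 2 * ((n - m : ℕ) : ℝ) ^ m := by
          rw [← mul_pow, Nat.cast_sub hmn]
          congr 2
          field_simp
          ring
  calc n ^ m ≤ 2 * (n - m) ^ m := mod_cast hpow
    _ ≤ 2 * (n + 1 - m) ^ m := by gcongr; exact n.le_succ
    _ ≤ 2 * n.descFactorial m := by gcongr; exact n.pow_sub_le_descFactorial m

theorem card_filter_powersetCard_mul_pow_le (hm : 2 * m ^ 2 ≤ #S) (P : Set α → Prop) :
    #((S.powersetCard m).filter fun Y : Finset α => P Y) * #S ^ m ≤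
      2 * #{y ∈ Fintype.piFinset fun _ : Fin m => S | P (Set.range y)} * #(S.powersetCard m) := by
  calc #((S.powersetCard m).filter fun Y : Finset α => P Y) * #S ^ m
      ≤ #((S.powersetCard m).filter fun Y : Finset α => P Y) * (2 * (#S).descFactorial m) := by
        gcongr
        exact pow_le_two_mul_descFactorial hm
    _ = 2 * (#((S.powersetCard m).filter fun Y : Finset α => P Y) * m.factorial) *
          #(S.powersetCard m) := by
        rw [Nat.descFactorial_eq_factorial_mul_choose, card_powersetCard]
        ring
    _ ≤ _ := by
        gcongr
        exact card_filter_powersetCard_mul_factorial_le S m P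

end Sampling

section Subspaces

variable {K ι : Type*} [Field K]

theorem exists_injOn_restrict [Finite ι] (U : Submodule K (ι → K)) :
    ∃ s : Finset ι, #s ≤ Module.finrank K U ∧ Set.InjOn s.restrict (U : Set (ι → K)) := by
  have := Fintype.ofFinite ι
  let coord (i : ι) : Module.Dual K U := LinearMap.proj i ∘ₗ U.subtype
  obtain ⟨b, -, -, hspan, hli⟩ := exists_linearIndepOn_extension
    (linearIndepOn_empty K coord) (Set.empty_subset Set.univ)
  refine ⟨b.toFinset, ?_, fun x hx y hy hxy => funext fun i => ?_⟩
  · rw [Set.toFinset_card, ← Subspace.dual_finrank_eq]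
    exact hli.fintype_card_le_finrank
  · let u : U := ⟨x, hx⟩ - ⟨y, hy⟩
    have hvanish : Submodule.span K (coord '' b) ≤ LinearMap.ker (Module.Dual.eval K U u) := by
      rw [Submodule.span_le]
      rintro _ ⟨j, hj, rfl⟩
      have hxyj : x j = y j := congrFun hxy ⟨j, Set.mem_toFinset.2 hj⟩
      simp [coord, u, hxyj]
    have hi : coord i u = 0 := hvanish (hspan ⟨i, Set.mem_univ i, rfl⟩)
    simpa [coord, u, sub_eq_zero] using hi

theorem card_filter_piFinset_mem_le [Fintype ι] [DecidableEq ι] (T : Finset K)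
    (U : Submodule K (ι → K)) (hT : T.Nonempty) :
    #{x ∈ Fintype.piFinset fun _ : ι => T | x ∈ U} ≤ #T ^ Module.finrank K U := by
  obtain ⟨s, hs, hinj⟩ := exists_injOn_restrict U
  calc #{x ∈ Fintype.piFinset fun _ : ι => T | x ∈ U}
      ≤ #(Fintype.piFinset fun _ : s => T) := by
        refine card_le_card_of_injOn s.restrict (fun x hx => ?_) (hinj.mono fun x hx => ?_)
        · exact Fintype.mem_piFinset.2 fun i =>
            Fintype.mem_piFinset.1 (mem_filter.1 hx).1 i
        · exact (mem_filter.1 hx).2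
    _ = #T ^ #s := by simp
    _ ≤ #T ^ Module.finrank K U := Nat.pow_le_pow_right hT.card_pos hs

end Subspaces

section Cube

variable {k : ℕ}

theorem pmCube_eq_piFinset (k : ℕ) : pmCube k = Fintype.piFinset fun _ => {-1, 1} := by
  ext x
  simp only [pmCube, mem_image, mem_univ, true_and, Fintype.mem_piFinset, mem_insert,
    mem_singleton]
  constructor
  · rintro ⟨f, rfl⟩ i
    cases hf : f i <;> simp [hf]
  · intro hx
    refine ⟨fun i => decide (x i = 1), funext fun i => ?_⟩
    rcases hx i with h | h <;> norm_num [h]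

theorem card_pmCube (k : ℕ) : #(pmCube k) = 2 ^ k := by
  rw [pmCube_eq_piFinset, Fintype.card_piFinset_const, card_pair (by norm_num)]

theorem two_pow_le_card_pmCubeStar_add_two (k : ℕ) : 2 ^ k ≤ #(pmCubeStar k) + 2 := by
  have hsdiff := le_card_sdiff ({-allOne k, allOne k} : Finset (Fin k → ℝ)) (pmCube k)
  have hpair : #({-allOne k, allOne k} : Finset (Fin k → ℝ)) ≤ 2 := card_le_two
  rw [card_pmCube] at hsdiff
  rw [pmCubeStar]
  omega

theorem neg_mem_pmCubeStar {x : Fin k → ℝ} (hx : x ∈ pmCubeStar k) : -x ∈ pmCubeStar k := by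
  simp only [pmCubeStar, pmCube_eq_piFinset, Finset.mem_sdiff, Fintype.mem_piFinset, mem_insert,
    mem_singleton, Pi.neg_apply, neg_eq_iff_eq_neg] at hx ⊢
  simpa only [neg_neg, or_comm] using hx

theorem card_filter_pmCubeStar_mem_le (U : Submodule ℝ (Fin k → ℝ)) :
    #{x ∈ pmCubeStar k | x ∈ U} ≤ 2 ^ Module.finrank ℝ U := by
  calc #{x ∈ pmCubeStar k | x ∈ U} ≤ #{x ∈ pmCube k | x ∈ U} := by
        exact card_le_card (filter_subset_filter _ sdiff_subset)
    _ ≤ #({-1, 1} : Finset ℝ) ^ Module.finrank ℝ U := by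
        rw [pmCube_eq_piFinset]
        exact card_filter_piFinset_mem_le _ U (by simp)
    _ = 2 ^ Module.finrank ℝ U := by rw [card_pair (by norm_num)]

end Cube

section LongEdge

variable {k m : ℕ}

/-- The coercion inside the filter of `tau` makes Lean filter the coerced family of `Set`s, so the
event has to be transported back to `Finset`s. -/
theorem tau_eq (k m : ℕ) : tau k m =
    #(((pmCubeStar k).powersetCard m).filter fun Y : Finset (Fin k → ℝ) =>
      convexHull ℝ (Y : Set (Fin k → ℝ)) ∩ segment ℝ (-(allOne k)) (allOne k) = ∅) /
    #((pmCubeStar k).powersetCard m) := by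
  unfold tau
  congr 2
  refine (card_bij (fun (Y : Finset (Fin k → ℝ)) _ => (Y : Set (Fin k → ℝ))) ?_
    (fun _ _ _ _ h => coe_injective h) ?_).symm
  · intro Y hY
    simpa [Finset.bind_def, Finset.pure_def, Finset.mem_sup] using hY
  · intro Z hZ
    simp only [Finset.bind_def, Finset.pure_def, mem_filter, Finset.mem_sup, mem_singleton] at hZ
    obtain ⟨⟨Y, hY, rfl⟩, h⟩ := hZ
    exact ⟨Y, mem_filter.2 ⟨hY, h⟩, rfl⟩

theorem tau_le_one (k m : ℕ) : tau k m ≤ 1 := by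
  rw [tau_eq]
  exact div_le_one_of_le₀ (mod_cast card_filter_le _ _) (Nat.cast_nonneg _)

theorem one_sub_tau_eq (hm : m ≤ #(pmCubeStar k)) : 1 - tau k m =
    #(((pmCubeStar k).powersetCard m).filter fun Y : Finset (Fin k → ℝ) =>
      (convexHull ℝ (Y : Set (Fin k → ℝ)) ∩ segment ℝ (-(allOne k)) (allOne k)).Nonempty) /
    #((pmCubeStar k).powersetCard m) := by
  have hpos : (#((pmCubeStar k).powersetCard m) : ℝ) ≠ 0 :=
    Nat.cast_ne_zero.2 (card_ne_zero.2 (powersetCard_nonempty.2 hm))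
  rw [tau_eq, eq_div_iff hpos, sub_mul, div_mul_cancel₀ _ hpos, one_mul, sub_eq_iff_eq_add']
  simp only [← Set.not_nonempty_iff_eq_empty]
  exact_mod_cast ((add_comm _ _).trans (card_filter_add_card_filter_not _)).symm

theorem segment_neg_allOne_subset_span (k : ℕ) :
    segment ℝ (-allOne k) (allOne k) ⊆ (Submodule.span ℝ {allOne k} : Set (Fin k → ℝ)) :=
  have hmem : allOne k ∈ Submodule.span ℝ {allOne k} := Submodule.mem_span_singleton_self _
  (Submodule.convex _).segment_subset (neg_mem hmem) hmem

theorem one_sub_tau_le (hm : 2 * m ^ 2 ≤ #(pmCubeStar k)) :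
    1 - tau k m ≤
      2 * (#(badTuples (pmCubeStar k) m (Submodule.span ℝ {allOne k})) / #(pmCubeStar k) ^ m) := by
  let Meets (A : Set (Fin k → ℝ)) : Prop :=
    (convexHull ℝ A ∩ segment ℝ (-(allOne k)) (allOne k)).Nonempty
  have hle : m ≤ #(pmCubeStar k) := by nlinarith
  have hmeets : {y ∈ Fintype.piFinset fun _ : Fin m => pmCubeStar k | Meets (Set.range y)} ⊆
      badTuples (pmCubeStar k) m (Submodule.span ℝ {allOne k}) :=
    monotone_filter_right _ fun y _ hy hgood => hy.ne_empty <| Set.disjoint_iff_inter_eq_empty.1 <|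
      hgood.disjoint_convexHull.mono_right (segment_neg_allOne_subset_span k)
  have hcard : #(((pmCubeStar k).powersetCard m).filter fun Y : Finset (Fin k → ℝ) => Meets Y) *
      #(pmCubeStar k) ^ m ≤
        2 * #(badTuples (pmCubeStar k) m (Submodule.span ℝ {allOne k})) *
          #((pmCubeStar k).powersetCard m) := by
    refine (card_filter_powersetCard_mul_pow_le hm Meets).trans ?_
    gcongr
  have hpow : 0 < #(pmCubeStar k) ^ m := by
    rcases m.eq_zero_or_pos with rfl | hm0
    · simp
    · exact pow_pos (hm0.trans_le hle) m
  have hsets : 0 < #((pmCubeStar k).powersetCard m) :=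
    card_pos.2 (powersetCard_nonempty.2 hle)
  rw [one_sub_tau_eq hle, ← mul_div_assoc, div_le_div_iff₀ (mod_cast hsets) (mod_cast hpow)]
  exact_mod_cast hcard

end LongEdge

section Asymptotics

theorem one_add_exp_div_two_le (a : ℝ) :
    (1 + Real.exp a) / 2 ≤ Real.exp (a / 2 + a ^ 2 / 8) := by
  calc (1 + Real.exp a) / 2 = Real.exp (a / 2) * Real.cosh (a / 2) := by
        rw [Real.cosh_eq, mul_div_assoc', mul_add, ← Real.exp_add, ← Real.exp_add, add_halves,
          add_neg_cancel, Real.exp_zero, add_comm]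
    _ ≤ Real.exp (a / 2) * Real.exp ((a / 2) ^ 2 / 2) := by
        gcongr
        exact Real.cosh_le_exp_half_sq _
    _ = Real.exp (a / 2 + a ^ 2 / 8) := by
        rw [← Real.exp_add]
        ring_nf

theorem eight_mul_sq_add_two_le_two_pow {k : ℕ} (hk : 10 ≤ k) : 8 * k ^ 2 + 2 ≤ 2 ^ k := by
  induction k, hk using Nat.le_induction with
  | base => norm_num
  | succ k hk ih => rw [pow_succ 2]; nlinarith

variable {k m : ℕ} {η : ℝ}

theorem card_filter_pmCubeStar_mem_le_of_finrank_lt (hk : 2 ≤ k)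
    {V : Submodule ℝ (Fin k → ℝ)} (hV : Module.finrank ℝ V < (1 - η) * k) :
    (#{x ∈ pmCubeStar k | x ∈ V} : ℝ) ≤ 2 * ((2 : ℝ) ^ (-η)) ^ k * #(pmCubeStar k) := by
  have hcube : (2 : ℝ) ^ k ≤ 2 * #(pmCubeStar k) := by
    have hfour : 2 ^ 2 ≤ 2 ^ k := Nat.pow_le_pow_right two_pos hk
    have hstar := two_pow_le_card_pmCubeStar_add_two k
    exact_mod_cast (by omega : 2 ^ k ≤ 2 * #(pmCubeStar k))
  calc (#{x ∈ pmCubeStar k | x ∈ V} : ℝ)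
      ≤ (2 : ℝ) ^ (Module.finrank ℝ V : ℝ) := by
        rw [Real.rpow_natCast]
        exact_mod_cast card_filter_pmCubeStar_mem_le V
    _ ≤ (2 : ℝ) ^ ((1 - η) * k) := Real.rpow_le_rpow_of_exponent_le one_le_two hV.le
    _ = ((2 : ℝ) ^ (-η)) ^ k * 2 ^ k := by
        rw [Real.rpow_mul_natCast zero_le_two, sub_eq_neg_add, Real.rpow_add two_pos,
          Real.rpow_one, mul_pow]
    _ ≤ ((2 : ℝ) ^ (-η)) ^ k * (2 * #(pmCubeStar k)) := by gcongr
    _ = 2 * ((2 : ℝ) ^ (-η)) ^ k * #(pmCubeStar k) := by ring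

/-- Chernoff's bound for `(2 - 4 * η) * k` fair coin tosses to reach `(1 - η) * k`; the optimal
exponent is `2 * η / (1 - 2 * η)`, here replaced by `2 * η`. -/
theorem chernoff_bound (hη : 0 ≤ η) (hm : m ≤ (2 - 4 * η) * k) {d : ℝ} (hd : d ≤ 1) :
    ((1 + Real.exp (2 * η)) / 2) ^ m * Real.exp (2 * η * (d - (1 - η) * k)) ≤
      Real.exp (2 * η - η ^ 2 * k) := by
  calc ((1 + Real.exp (2 * η)) / 2) ^ m * Real.exp (2 * η * (d - (1 - η) * k))
      ≤ Real.exp (2 * η / 2 + (2 * η) ^ 2 / 8) ^ m *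
          Real.exp (2 * η * (d - (1 - η) * k)) := by
        gcongr
        exact one_add_exp_div_two_le _
    _ = Real.exp (m * (2 * η / 2 + (2 * η) ^ 2 / 8) + 2 * η * (d - (1 - η) * k)) := by
        rw [← Real.exp_nat_mul, ← Real.exp_add]
    _ ≤ Real.exp (2 * η - η ^ 2 * k) := by
        have hrate : (m : ℝ) * (η + η ^ 2 / 2) ≤ (2 - 4 * η) * k * (η + η ^ 2 / 2) := by gcongr
        have hcube : 0 ≤ η ^ 3 * k := by positivity
        gcongr
        nlinarith [mul_le_mul_of_nonneg_left hd hη]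

theorem one_sub_tau_le_of_le (hη : 0 ≤ η) (hk : 10 ≤ k) (hm : m ≤ (2 - 4 * η) * k) :
    1 - tau k m ≤ 2 * (Real.exp (2 * η - η ^ 2 * k) + 4 * (k * ((2 : ℝ) ^ (-η)) ^ k)) := by
  have hm2 : m ≤ 2 * k := by
    have hηk : 0 ≤ η * k := by positivity
    exact_mod_cast (by linarith : (m : ℝ) ≤ 2 * k)
  have hsq : 2 * m ^ 2 ≤ #(pmCubeStar k) := by
    have hpow := eight_mul_sq_add_two_le_two_pow hk
    have hstar := two_pow_le_card_pmCubeStar_add_two k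
    nlinarith
  have hline : (Module.finrank ℝ (Submodule.span ℝ {allOne k}) : ℝ) ≤ 1 := by
    exact_mod_cast (finrank_span_le_card {allOne k}).trans (by simp)
  have hbad := card_badTuples_le (S := pmCubeStar k) (fun _ => neg_mem_pmCubeStar)
    (by positivity : 0 ≤ 2 * η) (by positivity : 0 ≤ 2 * ((2 : ℝ) ^ (-η)) ^ k)
    (fun V hV => card_filter_pmCubeStar_mem_le_of_finrank_lt (by omega) hV)
    m (Submodule.span ℝ {allOne k})
  calc 1 - tau k m
      ≤ 2 * (#(badTuples (pmCubeStar k) m (Submodule.span ℝ {allOne k})) / #(pmCubeStar k) ^ m) :=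
        one_sub_tau_le hsq
    _ ≤ 2 * (((1 + Real.exp (2 * η)) / 2) ^ m * Real.exp (2 * η *
          (Module.finrank ℝ (Submodule.span ℝ {allOne k}) - (1 - η) * k)) +
            m * (2 * ((2 : ℝ) ^ (-η)) ^ k)) := by
        gcongr
        exact div_le_of_le_mul₀ (by positivity) (by positivity) (hbad.trans_eq (mul_comm _ _))
    _ ≤ 2 * (Real.exp (2 * η - η ^ 2 * k) + (2 * k : ℕ) * (2 * ((2 : ℝ) ^ (-η)) ^ k)) := by
        gcongr
        exact chernoff_bound hη hm hline
    _ = 2 * (Real.exp (2 * η - η ^ 2 * k) + 4 * (k * ((2 : ℝ) ^ (-η)) ^ k)) := by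
        push_cast
        ring

theorem tendsto_tau_error_nhds_zero (hη : 0 < η) :
    Tendsto (fun k : ℕ => 2 * (Real.exp (2 * η - η ^ 2 * k) + 4 * (k * ((2 : ℝ) ^ (-η)) ^ k)))
      atTop (nhds 0) := by
  have hexp : Tendsto (fun k : ℕ => Real.exp (2 * η - η ^ 2 * k)) atTop (nhds 0) := by
    refine Real.tendsto_exp_atBot.comp (tendsto_atBot_add_const_left _ _ ?_)
    exact tendsto_neg_atTop_atBot.comp
      (tendsto_natCast_atTop_atTop.const_mul_atTop (by positivity))
  have hgeom : Tendsto (fun k : ℕ => k * ((2 : ℝ) ^ (-η)) ^ k) atTop (nhds 0) :=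
    tendsto_self_mul_const_pow_of_lt_one (by positivity)
      (Real.rpow_lt_one_of_one_lt_of_neg one_lt_two (neg_lt_zero.2 hη))
  simpa using (hexp.add (hgeom.const_mul 4)).const_mul 2

theorem statement16_general {c : ℝ} (hc : c < 2) {m : ℕ → ℕ}
    (hm : ∀ᶠ k : ℕ in atTop, m k ≤ c * k) :
    Tendsto (fun k => tau k (m k)) atTop (nhds 1) := by
  obtain ⟨η, hη, rfl⟩ : ∃ η > 0, 2 - 4 * η = c := ⟨(2 - c) / 4, by linarith, by ring⟩
  have hlower : Tendsto (fun k : ℕ =>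
      1 - 2 * (Real.exp (2 * η - η ^ 2 * k) + 4 * (k * ((2 : ℝ) ^ (-η)) ^ k))) atTop (nhds 1) := by
    simpa using (tendsto_tau_error_nhds_zero hη).const_sub 1
  refine tendsto_of_tendsto_of_tendsto_of_le_of_le' hlower tendsto_const_nhds ?_
    (.of_forall fun k => tau_le_one k (m k))
  filter_upwards [hm, eventually_ge_atTop 10] with k hmk hk
  exact sub_le_comm.1 (one_sub_tau_le_of_le hη.le hk hmk)

end Asymptotics

-- STATEMENT 16
theorem statement16 (ε : ℝ) (hε : 0 < ε) :
    Tendsto (fun k => tau k ⌊(2 - ε) * (k : ℝ)⌋₊) atTop (nhds 1) := by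
  refine statement16_general (c := max (2 - ε) 0) (max_lt (by linarith) two_pos)
    (.of_forall fun k => ?_)
  calc (⌊(2 - ε) * (k : ℝ)⌋₊ : ℝ) ≤ ⌊max (2 - ε) 0 * (k : ℝ)⌋₊ := by gcongr; exact le_max_left _ _
    _ ≤ max (2 - ε) 0 * k := Nat.floor_le (by positivity)

end
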